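/- Let G_1 = (V^{(1)},E^{(1)},w^{(1)},κ^{(1)}) be a weighted tree and G_2 = (V^{(2)},E^{(2)},w^{(2)},κ^{(2)}) a weighted bipartite graph, both with vertex measure identically 1 and nonnegative potentials κ^{(1)} ≥ 0, κ^{(2)} ≥ 0. Put n_1 = |V^{(1)}|, n_2 = |V^{(2)}|, and let G be the product graph of G_1 and G_2. Let {λ_i}_{i=1}^{n_1 n_2}, {λ^{(1)}_i}_{i=1}^{n_1} and {λ^{(2)}_i}_{i=1}^{n_2} be the eigenvalues of the Laplacians of G, G_1 and G_2 listed in ascending order. If λ^{(2)}_{n_2} < λ^{(1)}_{k+1} − λ^{(1)}_{k}, then ρ_{k n_2}(G) ≤ √(2 τ_G λ_{k n_2}). -/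

import Mathlib

open BigOperators Matrix Polynomial

/-- Conductance of a vertex subset `A`: boundary weight divided by its measure. -/
noncomputable def conductance {V : Type*} [Fintype V] [DecidableEq V]
    (w : V → V → ℝ) (μ : V → ℝ) (A : Finset V) : ℝ :=
  (∑ i ∈ A, ∑ j ∈ Aᶜ, w i j) / (∑ i ∈ A, μ i)

/-- The `k`-way Cheeger constant: infimum over `k`-tuples of pairwise disjoint
nonempty vertex subsets of the maximal conductance. -/
noncomputable def cheeger {V : Type*} [Fintype V] [DecidableEq V]
    (k : ℕ) (w : V → V → ℝ) (μ : V → ℝ) : ℝ :=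
  sInf {r | ∃ A : Fin k → Finset V, (∀ i, (A i).Nonempty) ∧
    Pairwise (Function.onFun Disjoint A) ∧ r = ⨆ i, conductance w μ (A i)}

/-- `τ_G = max_i d(i)/μ_i`. -/
noncomputable def tauMax {V : Type*} [Fintype V] (w : V → V → ℝ) (μ : V → ℝ) : ℝ :=
  ⨆ i, (∑ j, w i j) / μ i

/-- The (unnormalized) Laplacian `L = D + K - A` of a weighted graph with vertex
measure `≡ 1`. -/
noncomputable def lap {V : Type*} [Fintype V] [DecidableEq V]
    (w : V → V → ℝ) (κ : V → ℝ) : Matrix V V ℝ :=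
  Matrix.diagonal (fun i => ∑ j, w i j) + Matrix.diagonal κ - Matrix.of w

/-- The edge weight of the product of two weighted graphs. -/
noncomputable def prodWeight {V₁ V₂ : Type*} [DecidableEq V₁] [DecidableEq V₂]
    (w₁ : V₁ → V₁ → ℝ) (w₂ : V₂ → V₂ → ℝ) : V₁ × V₂ → V₁ × V₂ → ℝ :=
  fun p q => (if p.1 = q.1 then w₂ p.2 q.2 else 0) + (if p.2 = q.2 then w₁ p.1 q.1 else 0)

/-- The potential of the product graph: `κ_{(x,y)} = κ¹_x + κ²_y`. -/
noncomputable def prodPotential {V₁ V₂ : Type*} (κ₁ : V₁ → ℝ) (κ₂ : V₂ → ℝ) :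
    V₁ × V₂ → ℝ :=
  fun p => κ₁ p.1 + κ₂ p.2

/-!
Gaussian elimination of the form `f ⬝ᵥ (L₁ - λ) *ᵥ f` that always pivots on a leaf never creates an
edge, so it can be carried through on a forest. At a nonpositive pivot the leaf is deleted and its
point mass becomes a test function with Rayleigh quotient at most `λ`; when a positive pivot is
eliminated, the test functions extend over the leaf, and only the one whose support contains the
neighbour of the leaf grows, so the supports stay disjoint. The form is positive on nonzero vectors
vanishing at the nonpositive pivots, so these are at least as many as the dimension of any subspace
where the form is nonpositive: for `λ = λ¹_k`, at least `k`.

Tensoring these functions with the point masses of `G₂` gives `k n₂` functions on the product with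
disjoint supports and Rayleigh quotient at most `λ¹_k + λ²_{n₂}`. Level-set rounding turns each into
a set of conductance at most `√(2 τ (λ¹_k + λ²_{n₂}))`. The spectrum of the product consists of the
sums `λ¹_i + λ²_j`, and by the gap condition those below `λ¹_k + λ²_{n₂}` all have `i ≤ k`, whence
`λ¹_k + λ²_{n₂} ≤ λ_{k n₂}`.
-/

/-! ### Spectra of real symmetric matrices -/

section RealSymmetric

variable {V W ι κ : Type*} [Fintype V] [Fintype W] [Fintype ι] [Fintype κ]

theorem exists_equiv_of_prod_X_sub_C_eq {R : Type*} [CommRing R] [IsDomain R] {f : ι → R}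
    {g : κ → R} (h : ∏ i, (X - C (f i)) = ∏ j, (X - C (g j))) :
    ∃ σ : ι ≃ κ, ∀ i, g (σ i) = f i := by
  classical
  have hroots : Finset.univ.val.map f = Finset.univ.val.map g := by
    rw [← roots_multiset_prod_X_sub_C (Finset.univ.val.map f),
      ← roots_multiset_prod_X_sub_C (Finset.univ.val.map g), Multiset.map_map, Multiset.map_map]
    exact congrArg roots h
  have hfiber (c : R) : Nonempty ({i // f i = c} ≃ {j // g j = c}) := by
    refine Fintype.card_eq.mp ?_
    simpa only [Fintype.card_subtype, Multiset.count_map, Finset.card_def, Finset.filter_val,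
      eq_comm] using congrArg (Multiset.count c) hroots
  exact ⟨.ofFiberEquiv fun c ↦ (hfiber c).some, Equiv.ofFiberEquiv_map _⟩

theorem le_of_card_filter_lt_le {N : ℕ} {lam : Fin N → ℝ} (hlam : Monotone lam) {ν : ι → ℝ}
    (h : ∏ i, (X - C (lam i)) = ∏ j, (X - C (ν j))) {t : ℝ} {m : Fin N}
    (hcard : Finset.card {j | ν j < t} ≤ m) : t ≤ lam m := by
  obtain ⟨σ, hσ⟩ := exists_equiv_of_prod_X_sub_C_eq h
  by_contra! hlt
  have hinj : (Finset.Iic m).card ≤ Finset.card {j | ν j < t} :=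
    Finset.card_le_card_of_injOn σ
      (fun i hi ↦ by simpa [hσ] using (hlam (Finset.mem_Iic.mp hi)).trans_lt hlt) σ.injective.injOn
  rw [Fin.card_Iic] at hinj
  lia

theorem mulVec_dotProduct_mulVec_mulVec (A : Matrix V V ℝ) (B : Matrix V ι ℝ) (x : ι → ℝ) :
    (B *ᵥ x) ⬝ᵥ A *ᵥ (B *ᵥ x) = x ⬝ᵥ (Bᵀ * A * B) *ᵥ x := by
  rw [← mulVec_mulVec, ← mulVec_mulVec, dotProduct_mulVec x, vecMul_transpose]

variable [DecidableEq V] [DecidableEq W]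

theorem card_eq_of_charpoly_eq_prod {R : Type*} [CommRing R] [Nontrivial R] {A : Matrix V V R}
    {d : ι → R} (h : A.charpoly = ∏ i, (X - C (d i))) : Fintype.card V = Fintype.card ι := by
  rw [← A.charpoly_natDegree_eq_dim, h, natDegree_finsetProd_X_sub_C_eq_card,
    Finset.card_univ]

theorem charpoly_mul_diagonal_mul [DecidableEq ι] {R : Type*} [CommRing R] {P : Matrix V ι R}
    {Q : Matrix ι V R} (hQP : Q * P = 1) (hcard : Fintype.card ι = Fintype.card V) (d : ι → R) :
    (P * diagonal d * Q).charpoly = ∏ i, (X - C (d i)) := by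
  rw [charpoly_mul_comm_of_le _ _ hcard.le, ← Matrix.mul_assoc, hQP, Matrix.one_mul,
    charpoly_diagonal, hcard, Nat.sub_self, pow_zero, one_mul]

theorem exists_orthogonal_diagonalization [DecidableEq ι] {A : Matrix V V ℝ} (hA : A.IsSymm)
    {lam : ι → ℝ} (hlam : A.charpoly = ∏ i, (X - C (lam i))) :
    ∃ U : Matrix V ι ℝ, Uᵀ * U = 1 ∧ A = U * diagonal lam * Uᵀ := by
  have hH : A.IsHermitian := hA
  obtain ⟨σ, hσ⟩ := exists_equiv_of_prod_X_sub_C_eq (hlam.symm.trans hH.charpoly_eq)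
  set Q : Matrix V V ℝ := hH.eigenvectorUnitary.1
  have hQ : Qᵀ * Q = 1 := Unitary.coe_star_mul_self hH.eigenvectorUnitary
  have hAQ : A = Q * diagonal hH.eigenvalues * Qᵀ := hH.spectral_theorem
  have hd : diagonal lam = (diagonal hH.eigenvalues).submatrix σ σ := by
    rw [submatrix_diagonal_equiv]
    exact congrArg diagonal (funext fun i ↦ (hσ i).symm)
  refine ⟨Q.submatrix id σ, ?_, ?_⟩
  · rw [transpose_submatrix, ← submatrix_mul _ _ _ _ _ Function.bijective_id, hQ,
      submatrix_one_equiv]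
  · rw [hd, transpose_submatrix, submatrix_mul_equiv, submatrix_mul_equiv, ← hAQ, submatrix_id_id]

theorem nonneg_of_posSemidef_of_charpoly_eq_prod {A : Matrix V V ℝ} (hA : A.PosSemidef)
    {lam : ι → ℝ} (hlam : A.charpoly = ∏ i, (X - C (lam i))) (i : ι) : 0 ≤ lam i := by
  obtain ⟨σ, hσ⟩ := exists_equiv_of_prod_X_sub_C_eq (hlam.symm.trans hA.isHermitian.charpoly_eq)
  exact (hA.eigenvalues_nonneg (σ i)).trans_eq (hσ i)

theorem exists_submodule_rayleigh_le {A : Matrix V V ℝ} (hA : A.IsSymm) {lam : ι → ℝ}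
    (hlam : A.charpoly = ∏ i, (X - C (lam i))) {s : Finset ι} {c : ℝ} (hs : ∀ i ∈ s, lam i ≤ c) :
    ∃ E : Submodule ℝ (V → ℝ), Module.finrank ℝ E = s.card ∧
      ∀ f ∈ E, f ⬝ᵥ A *ᵥ f ≤ c * (f ⬝ᵥ f) := by
  classical
  obtain ⟨U, hU, hAU⟩ := exists_orthogonal_diagonalization hA hlam
  set B : Matrix V s ℝ := U.submatrix id (↑)
  have hB : Bᵀ * B = 1 := by
    have hsub : Bᵀ * B = (Uᵀ * U).submatrix (↑) (↑) := rfl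
    rw [hsub, hU, submatrix_one _ Subtype.val_injective]
  have hBA : Bᵀ * A * B = diagonal (fun i : s ↦ lam i) := by
    have hsub : Bᵀ * A * B = (Uᵀ * A * U).submatrix (↑) (↑) := rfl
    have hdiag : Uᵀ * A * U = diagonal lam := by
      rw [hAU, show Uᵀ * (U * diagonal lam * Uᵀ) * U = Uᵀ * U * diagonal lam * (Uᵀ * U) by
        simp only [Matrix.mul_assoc], hU, Matrix.one_mul, Matrix.mul_one]
    rw [hsub, hdiag, submatrix_diagonal _ _ Subtype.val_injective]
    rfl
  have hinj : Function.Injective B.mulVecLin :=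
    Function.LeftInverse.injective (g := Bᵀ.mulVecLin) fun x ↦ by
      rw [mulVecLin_apply, mulVecLin_apply, mulVec_mulVec, hB, one_mulVec]
  refine ⟨LinearMap.range B.mulVecLin, by simp [LinearMap.finrank_range_of_inj hinj], ?_⟩
  rintro _ ⟨x, rfl⟩
  have hnorm : (B *ᵥ x) ⬝ᵥ (B *ᵥ x) = x ⬝ᵥ x := by
    have hone := mulVec_dotProduct_mulVec_mulVec 1 B x
    rwa [Matrix.mul_one, hB, one_mulVec, one_mulVec] at hone
  rw [mulVecLin_apply, mulVec_dotProduct_mulVec_mulVec, hBA, hnorm, dotProduct, dotProduct,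
    Finset.mul_sum]
  refine Finset.sum_le_sum fun i _ ↦ ?_
  rw [mulVec_diagonal, mul_left_comm]
  exact mul_le_mul_of_nonneg_right (hs i i.2) (mul_self_nonneg _)

theorem rayleigh_le_of_charpoly_eq_prod {A : Matrix V V ℝ} (hA : A.IsSymm) {lam : ι → ℝ}
    (hlam : A.charpoly = ∏ i, (X - C (lam i))) {c : ℝ} (hc : ∀ i, lam i ≤ c) (f : V → ℝ) :
    f ⬝ᵥ A *ᵥ f ≤ c * (f ⬝ᵥ f) := by
  obtain ⟨E, hE, hf⟩ := exists_submodule_rayleigh_le hA hlam (s := Finset.univ) fun i _ ↦ hc i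
  have hE_top : E = ⊤ := Submodule.eq_top_of_finrank_eq <| by
    rw [hE, Finset.card_univ, Module.finrank_fintype_fun_eq_card,
      card_eq_of_charpoly_eq_prod hlam]
  exact hf f (hE_top ▸ Submodule.mem_top)

open scoped Kronecker in
theorem charpoly_kronecker_one_add_one_kronecker {A : Matrix V V ℝ} {B : Matrix W W ℝ}
    (hA : A.IsSymm) (hB : B.IsSymm) {a : ι → ℝ} {b : κ → ℝ}
    (ha : A.charpoly = ∏ i, (X - C (a i))) (hb : B.charpoly = ∏ j, (X - C (b j))) :
    (A ⊗ₖ (1 : Matrix W W ℝ) + (1 : Matrix V V ℝ) ⊗ₖ B).charpoly =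
      ∏ p : ι × κ, (X - C (a p.1 + b p.2)) := by
  classical
  have hιV := (card_eq_of_charpoly_eq_prod ha).symm
  have hκW := (card_eq_of_charpoly_eq_prod hb).symm
  obtain ⟨P, hP, hAP⟩ := exists_orthogonal_diagonalization hA ha
  obtain ⟨Q, hQ, hBQ⟩ := exists_orthogonal_diagonalization hB hb
  have hP' : P * Pᵀ = 1 := (mul_eq_one_comm_of_card_eq _ _ _ hιV).mp hP
  have hQ' : Q * Qᵀ = 1 := (mul_eq_one_comm_of_card_eq _ _ _ hκW).mp hQ
  have hdiag : diagonal (fun p : ι × κ ↦ a p.1 + b p.2) =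
      diagonal a ⊗ₖ (1 : Matrix κ κ ℝ) + (1 : Matrix ι ι ℝ) ⊗ₖ diagonal b := by
    simp only [← diagonal_one, diagonal_kronecker_diagonal, diagonal_add, mul_one, one_mul]
  have hdecomp : A ⊗ₖ (1 : Matrix W W ℝ) + (1 : Matrix V V ℝ) ⊗ₖ B =
      (P ⊗ₖ Q) * diagonal (fun p : ι × κ ↦ a p.1 + b p.2) * (Pᵀ ⊗ₖ Qᵀ) := by
    rw [hdiag, Matrix.mul_add, Matrix.add_mul]
    simp only [← mul_kronecker_mul, Matrix.mul_one, hP', hQ', ← hAP, ← hBQ]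
  rw [hdecomp]
  refine charpoly_mul_diagonal_mul ?_ ?_ _
  · rw [← mul_kronecker_mul, hP, hQ, one_kronecker_one]
  · rw [Fintype.card_prod, Fintype.card_prod, hιV, hκW]

end RealSymmetric

/-! ### Gaussian elimination along a forest -/

section Forest

variable {V : Type*} {G : SimpleGraph V} {M : Matrix V V ℝ} {S T : Finset V} {u v : V}
  {g : V → V → ℝ}

theorem exists_mem_forall_adj_eq (hG : G.IsAcyclic) (hS : S.Nonempty) :
    ∃ v ∈ S, ∃ u, ∀ j ∈ S, G.Adj v j → j = u := by
  classical
  obtain ⟨r, hr⟩ := hS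
  have hcomp : {x ∈ S | G.Reachable r x}.Nonempty := ⟨r, by simp [hr]⟩
  obtain ⟨v, hv, hmax⟩ := Finset.exists_max_image _ (G.dist r) hcomp
  obtain ⟨hvS, hrv⟩ := Finset.mem_filter.mp hv
  obtain ⟨p, hp, -⟩ := hrv.exists_path_of_dist
  refine ⟨v, hvS, p.penultimate, fun j hj hvj ↦ ?_⟩
  have hrj : G.Reachable r j := hrv.trans hvj.reachable
  obtain ⟨q, hq, hq_dist⟩ := hrj.exists_path_of_dist
  have hvq : v ∉ q.support := fun hvq ↦ by
    have hlt := q.length_takeUntil_lt_length hvq hvj.ne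
    have hle := SimpleGraph.dist_le (q.takeUntil v hvq)
    have hjv := hmax j (by simp [hj, hrj])
    lia
  exact hG.eq_penultimate_of_adj_end hp hvj
    (hG.mem_support_of_ne_mem_support_of_adj_of_isPath hp hq hvj hvq)

/-- The Schur complement of the pivot `v` in a symmetric matrix, kept on the full index set: row and
column `v` become zero instead of being removed. -/
noncomputable def eliminate (M : Matrix V V ℝ) (v : V) : Matrix V V ℝ :=
  M - (M v v)⁻¹ • vecMulVec (M v) (M v)

theorem eliminate_isSymm (hM : M.IsSymm) (v : V) : (eliminate M v).IsSymm := by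
  rw [eliminate, IsSymm, transpose_sub, transpose_smul, transpose_vecMulVec, hM.eq]

theorem eliminate_apply_of_mul_eq_zero {i j : V} (h : M v i * M v j = 0) :
    eliminate M v i j = M i j := by
  simp [eliminate, vecMulVec_apply, h]

section Fintype

variable [Fintype V]

theorem dotProduct_mulVec_eq_eliminate (M : Matrix V V ℝ) (v : V) (f : V → ℝ) :
    f ⬝ᵥ M *ᵥ f = f ⬝ᵥ eliminate M v *ᵥ f + (M v ⬝ᵥ f) ^ 2 / M v v := by
  rw [eliminate, sub_mulVec, smul_mulVec, vecMulVec_mulVec, dotProduct_sub, dotProduct_smul]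
  simp only [dotProduct_comm f, op_smul_eq_smul, smul_dotProduct, smul_eq_mul]
  ring

theorem dotProduct_eliminate_mulVec_congr (hM : M.IsSymm) (hv : M v v ≠ 0) {f f' : V → ℝ}
    (hff' : ∀ i, i ≠ v → f i = f' i) :
    f ⬝ᵥ eliminate M v *ᵥ f = f' ⬝ᵥ eliminate M v *ᵥ f' := by
  have hrow (j : V) : eliminate M v v j = 0 := by
    simp [eliminate, vecMulVec_apply, inv_mul_cancel_left₀ hv]
  have hcol (i : V) : eliminate M v i v = 0 := by rw [(eliminate_isSymm hM v).apply, hrow]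
  simp only [dotProduct, mulVec]
  refine Finset.sum_congr rfl fun i _ ↦ ?_
  rcases eq_or_ne i v with rfl | hi
  · simp [hrow]
  rw [hff' i hi]
  congr 1
  refine Finset.sum_congr rfl fun j _ ↦ ?_
  rcases eq_or_ne j v with rfl | hj
  · simp [hcol]
  · rw [hff' j hj]

theorem dotProduct_mulVec_update_eq_eliminate [DecidableEq V] (hM : M.IsSymm) (hv : M v v ≠ 0)
    {f : V → ℝ} (hf : f v = 0) :
    Function.update f v (-(M v ⬝ᵥ f) / M v v) ⬝ᵥ
        M *ᵥ Function.update f v (-(M v ⬝ᵥ f) / M v v) = f ⬝ᵥ eliminate M v *ᵥ f := by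
  set a := -(M v ⬝ᵥ f) / M v v with ha
  have hsplit : Function.update f v a = f + Pi.single v a := by
    ext i
    rcases eq_or_ne i v with rfl | hi <;> simp [*]
  have hrow : M v ⬝ᵥ Function.update f v a = 0 := by
    rw [hsplit, dotProduct_add, dotProduct_single, ha, mul_div_cancel₀ _ hv, add_neg_cancel]
  rw [dotProduct_mulVec_eq_eliminate M v, hrow, zero_pow two_ne_zero, zero_div, add_zero]
  exact dotProduct_eliminate_mulVec_congr hM hv fun i hi ↦ Function.update_of_ne hi _ _

/-- The outcome of Gaussian elimination of the form `f ↦ f ⬝ᵥ M *ᵥ f` on the vertices in `S`: the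
vertices in `T` are the nonpositive pivots, each carrying a test function `g t` on which the form is
nonpositive, the test functions are supported on disjoint parts of `S`, and the form is positive
definite on functions that live on `S` and vanish on `T`. -/
structure IsNodalFamily (M : Matrix V V ℝ) (S T : Finset V) (g : V → V → ℝ) : Prop where
  subset : T ⊆ S
  ne_zero : ∀ t ∈ T, g t ≠ 0
  support_subset : ∀ t ∈ T, Function.support (g t) ⊆ S
  pairwiseDisjoint : (T : Set V).PairwiseDisjoint fun t ↦ Function.support (g t)
  nonpos : ∀ t ∈ T, g t ⬝ᵥ M *ᵥ g t ≤ 0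
  pos : ∀ f : V → ℝ, f ≠ 0 → Function.support f ⊆ S → (∀ t ∈ T, f t = 0) → 0 < f ⬝ᵥ M *ᵥ f

namespace IsNodalFamily

theorem empty (M : Matrix V V ℝ) (g : V → V → ℝ) : IsNodalFamily M ∅ ∅ g where
  subset := subset_rfl
  ne_zero := by simp
  support_subset := by simp
  pairwiseDisjoint := by simp
  nonpos := by simp
  pos f hf hsupp _ := absurd (by simpa using hsupp) hf

theorem finrank_le_card (h : IsNodalFamily M Finset.univ T g) {E : Submodule ℝ (V → ℝ)}
    (hE : ∀ f ∈ E, f ⬝ᵥ M *ᵥ f ≤ 0) : Module.finrank ℝ E ≤ T.card := by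
  by_contra! hlt
  have hker := LinearMap.ker_ne_bot_of_finrank_lt
    (f := (LinearMap.funLeft ℝ ℝ ((↑) : T → V)).comp E.subtype) (by simpa using hlt)
  obtain ⟨f, hf, hf0⟩ := Submodule.exists_mem_ne_zero_of_ne_bot hker
  refine (hE f f.2).not_gt (h.pos f (by simpa using hf0) (by simp) fun t ht ↦ ?_)
  exact congrFun (LinearMap.mem_ker.mp hf) ⟨t, ht⟩

variable [DecidableEq V]

theorem insert_of_nonpos (h : IsNodalFamily M S T g) (hvS : v ∉ S) (hv : M v v ≤ 0) :
    IsNodalFamily M (insert v S) (insert v T) (Function.update g v (Pi.single v 1)) := by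
  have hgT : ∀ t ∈ T, Function.update g v (Pi.single v 1) t = g t := fun t ht ↦
    Function.update_of_ne (ne_of_mem_of_not_mem (h.subset ht) hvS) _ _
  have hgv : Function.update g v (Pi.single v 1) v = Pi.single v 1 := Function.update_self ..
  refine {
    subset := Finset.insert_subset_insert v h.subset
    ne_zero := Finset.forall_mem_insert _ _ _ |>.mpr
      ⟨by simp, fun t ht ↦ hgT t ht ▸ h.ne_zero t ht⟩
    support_subset := ?support_subset
    pairwiseDisjoint := ?pairwiseDisjoint
    nonpos := Finset.forall_mem_insert _ _ _ |>.mpr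
      ⟨by simpa [hgv] using hv, fun t ht ↦ hgT t ht ▸ h.nonpos t ht⟩
    pos := fun f hf hsupp hfT ↦ ?pos }
  case support_subset =>
    refine Finset.forall_mem_insert _ _ _ |>.mpr ⟨by simp, fun t ht ↦ ?_⟩
    rw [hgT t ht, Finset.coe_insert]
    exact (h.support_subset t ht).trans (Set.subset_insert _ _)
  case pairwiseDisjoint =>
    rw [Finset.coe_insert, Set.pairwiseDisjoint_insert_of_notMem fun hvT ↦ hvS (h.subset hvT)]
    refine ⟨fun s hs t ht hst ↦ ?_, fun t ht ↦ ?_⟩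
    · simpa only [Function.onFun, hgT s hs, hgT t ht] using h.pairwiseDisjoint hs ht hst
    · have hvt : v ∉ Function.support (g t) := fun hmem ↦ hvS (h.support_subset t ht hmem)
      simpa [hgT t ht, hgv] using hvt
  case pos =>
    obtain ⟨hfv, hfT⟩ := Finset.forall_mem_insert _ _ _ |>.mp hfT
    rw [Finset.coe_insert, Set.subset_insert_iff_of_notMem (by simpa using hfv)] at hsupp
    exact h.pos f hf hsupp hfT

theorem pos_of_eliminate (h : IsNodalFamily (eliminate M v) S T g) (hM : M.IsSymm) (hvS : v ∉ S)
    (hv : 0 < M v v) {f : V → ℝ} (hf : f ≠ 0)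
    (hsupp : Function.support f ⊆ (insert v S : Finset V)) (hfT : ∀ t ∈ T, f t = 0) :
    0 < f ⬝ᵥ M *ᵥ f := by
  have hcongr : f ⬝ᵥ eliminate M v *ᵥ f =
      Function.update f v 0 ⬝ᵥ eliminate M v *ᵥ Function.update f v 0 :=
    dotProduct_eliminate_mulVec_congr hM hv.ne' fun i hi ↦ (Function.update_of_ne hi _ _).symm
  rw [dotProduct_mulVec_eq_eliminate M v, hcongr]
  rcases eq_or_ne (Function.update f v 0) 0 with h0 | h0
  · have hf_single : f = Pi.single v (f v) := by
      ext i
      rcases eq_or_ne i v with rfl | hi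
      · simp
      · simpa [hi] using congrFun h0 i
    have hfv : f v ≠ 0 := fun h0 ↦ hf (by rw [hf_single, h0, Pi.single_zero])
    have hrow : M v ⬝ᵥ f = M v v * f v := by rw [hf_single, dotProduct_single, Pi.single_eq_same]
    rw [h0, zero_dotProduct, zero_add, hrow]
    positivity
  · refine add_pos_of_pos_of_nonneg (h.pos _ h0 (fun i hi ↦ ?_) fun t ht ↦ ?_) (by positivity)
    · obtain ⟨hfi, hiv⟩ : f i ≠ 0 ∧ i ≠ v := by
        rcases eq_or_ne i v with rfl | hiv <;> simp_all
      exact Finset.mem_of_mem_insert_of_ne (hsupp hfi) hiv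
    · rw [Function.update_of_ne (ne_of_mem_of_not_mem (h.subset ht) hvS), hfT t ht]

theorem of_eliminate (h : IsNodalFamily (eliminate M v) S T g) (hM : M.IsSymm) (hvS : v ∉ S)
    (hv : 0 < M v v) (hu : ∀ j ∈ S, M v j ≠ 0 → j = u) :
    IsNodalFamily M (insert v S) T
      fun t ↦ Function.update (g t) v (-(M v ⬝ᵥ g t) / M v v) := by
  have hgv : ∀ t ∈ T, g t v = 0 := fun t ht ↦ by
    by_contra hne
    exact hvS (h.support_subset t ht hne)
  have hu_mem : ∀ t ∈ T, M v ⬝ᵥ g t ≠ 0 → u ∈ Function.support (g t) := fun t ht hne ↦ by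
    obtain ⟨j, -, hj⟩ := Finset.exists_ne_zero_of_sum_ne_zero hne
    have hjS : j ∈ S := h.support_subset t ht (right_ne_zero_of_mul hj)
    exact hu j hjS (left_ne_zero_of_mul hj) ▸ right_ne_zero_of_mul hj
  refine {
    subset := h.subset.trans (Finset.subset_insert v S)
    ne_zero := fun t ht hzero ↦ ?ne_zero
    support_subset := fun t ht i hi ↦ ?support_subset
    pairwiseDisjoint := fun s hs t ht hst ↦ Set.disjoint_left.mpr fun i his hit ↦ ?pairwiseDisjoint
    nonpos := fun t ht ↦
      (dotProduct_mulVec_update_eq_eliminate hM hv.ne' (hgv t ht)).trans_le (h.nonpos t ht)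
    pos := fun f hf hsupp hfT ↦ pos_of_eliminate h hM hvS hv hf hsupp hfT }
  case ne_zero =>
    refine h.ne_zero t ht (funext fun i ↦ ?_)
    rcases eq_or_ne i v with rfl | hi
    · exact hgv t ht
    · simpa [hi] using congrFun hzero i
  case support_subset =>
    rcases eq_or_ne i v with rfl | hiv
    · exact Finset.mem_insert_self i S
    · exact Finset.mem_insert_of_mem (h.support_subset t ht (by simpa [hiv] using hi))
  case pairwiseDisjoint =>
    rcases eq_or_ne i v with rfl | hiv
    · exact (h.pairwiseDisjoint hs ht hst).notMem_of_mem_left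
        (hu_mem s hs fun h0 ↦ by simp [h0] at his) (hu_mem t ht fun h0 ↦ by simp [h0] at hit)
    · exact (h.pairwiseDisjoint hs ht hst).notMem_of_mem_left
        (by simpa [hiv] using his) (by simpa [hiv] using hit)

end IsNodalFamily

theorem exists_isNodalFamily (hG : G.IsAcyclic) (hM : M.IsSymm)
    (S : Finset V) (hMG : ∀ i ∈ S, ∀ j ∈ S, i ≠ j → ¬G.Adj i j → M i j = 0) :
    ∃ T g, IsNodalFamily M S T g := by
  classical
  induction S using Finset.strongInduction generalizing M with
  | H S ih =>
    rcases S.eq_empty_or_nonempty with rfl | hS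
    · exact ⟨∅, 0, .empty M 0⟩
    obtain ⟨v, hvS, u, hu⟩ := exists_mem_forall_adj_eq hG hS
    have hu' : ∀ j ∈ S.erase v, M v j ≠ 0 → j = u := fun j hj hne ↦ by
      obtain ⟨hjv, hjS⟩ := Finset.mem_erase.mp hj
      exact hu j hjS (not_imp_comm.mp (hMG v hvS j hjS hjv.symm) hne)
    rcases le_or_gt (M v v) 0 with hv | hv
    · obtain ⟨T, g, h⟩ := ih _ (Finset.erase_ssubset hvS) hM fun i hi j hj ↦
        hMG i (Finset.mem_of_mem_erase hi) j (Finset.mem_of_mem_erase hj)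
      exact ⟨_, _, Finset.insert_erase hvS ▸ h.insert_of_nonpos (Finset.notMem_erase v S) hv⟩
    · obtain ⟨T, g, h⟩ := ih _ (Finset.erase_ssubset hvS) (eliminate_isSymm hM v)
        fun i hi j hj hij hadj ↦ by
          have hmul : M v i * M v j = 0 := by
            by_contra! hne
            exact hij ((hu' i hi (left_ne_zero_of_mul hne)).trans
              (hu' j hj (right_ne_zero_of_mul hne)).symm)
          rw [eliminate_apply_of_mul_eq_zero hmul]
          exact hMG i (Finset.mem_of_mem_erase hi) j (Finset.mem_of_mem_erase hj) hij hadj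
      exact ⟨_, _, Finset.insert_erase hvS ▸ h.of_eliminate hM (Finset.notMem_erase v S) hv hu'⟩

theorem exists_disjoint_rayleigh_le (hG : G.IsAcyclic) (hM : M.IsSymm)
    (hMG : ∀ i j, i ≠ j → ¬G.Adj i j → M i j = 0) {c : ℝ} {E : Submodule ℝ (V → ℝ)}
    (hE : ∀ f ∈ E, f ⬝ᵥ M *ᵥ f ≤ c * (f ⬝ᵥ f)) :
    ∃ g : Fin (Module.finrank ℝ E) → V → ℝ, (∀ a, g a ≠ 0) ∧
      Pairwise (Function.onFun Disjoint fun a ↦ Function.support (g a)) ∧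
      ∀ a, g a ⬝ᵥ M *ᵥ g a ≤ c * (g a ⬝ᵥ g a) := by
  classical
  have hshift (f : V → ℝ) : f ⬝ᵥ (M - c • 1) *ᵥ f ≤ 0 ↔ f ⬝ᵥ M *ᵥ f ≤ c * (f ⬝ᵥ f) := by
    simp [sub_mulVec, smul_mulVec, dotProduct_sub]
  obtain ⟨T, g, h⟩ := exists_isNodalFamily hG (M := M - c • 1)
    (hM.sub (isSymm_one.smul c)) Finset.univ fun i _ j _ hij hadj ↦ by
      simp [hMG i j hij hadj, one_apply_ne hij]
  obtain ⟨T', hT'T, hT'⟩ :=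
    Finset.exists_subset_card_eq (h.finrank_le_card fun f hf ↦ (hshift f).mpr (hE f hf))
  let e := T'.equivFinOfCardEq hT'
  have hmem (a) : (e.symm a : V) ∈ T := hT'T (e.symm a).2
  exact ⟨fun a ↦ g (e.symm a), fun a ↦ h.ne_zero _ (hmem a),
    fun a b hab ↦ h.pairwiseDisjoint (hmem a) (hmem b)
      (Subtype.val_injective.ne (e.symm.injective.ne hab)),
    fun a ↦ (hshift _).mp (h.nonpos _ (hmem a))⟩

end Fintype

end Forest

/-! ### Level-set rounding -/

section Cheeger

variable {V ι : Type*} [Fintype V] {w : V → V → ℝ} {κ : V → ℝ}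

theorem le_tauMax (w : V → V → ℝ) (μ : V → ℝ) (i : V) : (∑ j, w i j) / μ i ≤ tauMax w μ :=
  le_ciSup (f := fun i ↦ (∑ j, w i j) / μ i) (Set.finite_range _).bddAbove i

theorem tauMax_nonneg {μ : V → ℝ} (hw0 : ∀ i j, 0 ≤ w i j) (hμ : ∀ i, 0 ≤ μ i) :
    0 ≤ tauMax w μ :=
  Real.iSup_nonneg fun i ↦ div_nonneg (Finset.sum_nonneg fun j _ ↦ hw0 i j) (hμ i)

theorem sum_mul_swap (hw : ∀ i j, w i j = w j i) (F : V → V → ℝ) :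
    ∑ i, ∑ j, w i j * F j i = ∑ i, ∑ j, w i j * F i j := by
  rw [Finset.sum_comm]
  simp only [hw]

theorem two_mul_sum_mul_max_sub (hw : ∀ i j, w i j = w j i) (h : V → ℝ) :
    2 * ∑ i, ∑ j, w i j * max (h i - h j) 0 = ∑ i, ∑ j, w i j * |h i - h j| := by
  have hswap := sum_mul_swap hw fun i j ↦ max (h j - h i) 0
  rw [two_mul]
  nth_rw 2 [hswap]
  simp only [← Finset.sum_add_distrib, ← mul_add]
  refine Finset.sum_congr rfl fun i _ ↦ Finset.sum_congr rfl fun j _ ↦ ?_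
  rw [← neg_sub (h i) (h j), max_zero_add_max_neg_zero_eq_abs_self]

theorem sum_mul_add_sq_le (hw : ∀ i j, w i j = w j i) (hw0 : ∀ i j, 0 ≤ w i j) (f : V → ℝ) :
    ∑ i, ∑ j, w i j * (f i + f j) ^ 2 ≤ 4 * tauMax w (fun _ ↦ 1) * (f ⬝ᵥ f) := by
  have hswap := sum_mul_swap hw fun i _ ↦ f i ^ 2
  calc ∑ i, ∑ j, w i j * (f i + f j) ^ 2
      ≤ ∑ i, ∑ j, (2 * (w i j * f i ^ 2) + 2 * (w i j * f j ^ 2)) := by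
        gcongr with i _ j _
        nlinarith [mul_nonneg (hw0 i j) (sq_nonneg (f i - f j))]
    _ = 4 * ∑ i, (∑ j, w i j) * f i ^ 2 := by
        simp only [Finset.sum_add_distrib, ← Finset.mul_sum, hswap, Finset.sum_mul]
        ring
    _ ≤ 4 * ∑ i, tauMax w (fun _ ↦ 1) * f i ^ 2 := by
        gcongr with i
        simpa using le_tauMax w (fun _ ↦ 1) i
    _ = 4 * tauMax w (fun _ ↦ 1) * (f ⬝ᵥ f) := by
        simp only [dotProduct, ← Finset.mul_sum, ← pow_two]
        ring

/-- The Dirichlet energy `∑ w_{ij} (f_i - f_j)²` over ordered pairs, so that every edge counts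
twice. -/
noncomputable def dirichletEnergy (w : V → V → ℝ) (f : V → ℝ) : ℝ :=
  ∑ i, ∑ j, w i j * (f i - f j) ^ 2

theorem dirichletEnergy_nonneg (hw : ∀ i j, 0 ≤ w i j) (f : V → ℝ) : 0 ≤ dirichletEnergy w f :=
  Finset.sum_nonneg fun i _ ↦ Finset.sum_nonneg fun j _ ↦ mul_nonneg (hw i j) (sq_nonneg _)

theorem sq_sum_mul_abs_sq_sub_sq_le (hw0 : ∀ i j, 0 ≤ w i j) (f : V → ℝ) :
    (∑ i, ∑ j, w i j * |f i ^ 2 - f j ^ 2|) ^ 2 ≤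
      dirichletEnergy w f * ∑ i, ∑ j, w i j * (f i + f j) ^ 2 := by
  simp only [dirichletEnergy, ← Fintype.sum_prod_type']
  refine Finset.sum_sq_le_sum_mul_sum_of_sq_le_mul _ (fun p _ ↦ mul_nonneg (hw0 _ _) (sq_nonneg _))
    (fun p _ ↦ mul_nonneg (hw0 _ _) (sq_nonneg _)) fun p _ ↦ le_of_eq ?_
  rw [mul_pow, sq_abs]
  ring

theorem integrable_indicator_Ico (a b : ℝ) :
    MeasureTheory.Integrable ((Set.Ico a b).indicator (1 : ℝ → ℝ)) :=
  (MeasureTheory.integrable_indicator_iff measurableSet_Ico).mpr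
    (MeasureTheory.integrableOn_const (by simp))

theorem integrable_sum_mul_indicator_Ico [Fintype ι] (c a b : ι → ℝ) :
    MeasureTheory.Integrable fun t ↦ ∑ i, c i * (Set.Ico (a i) (b i)).indicator 1 t :=
  MeasureTheory.integrable_finsetSum _ fun _ _ ↦ (integrable_indicator_Ico _ _).const_mul _

theorem integral_sum_mul_indicator_Ico [Fintype ι] (c a b : ι → ℝ) :
    ∫ t, ∑ i, c i * (Set.Ico (a i) (b i)).indicator 1 t = ∑ i, c i * max (b i - a i) 0 := by
  rw [MeasureTheory.integral_finsetSum _ fun _ _ ↦ (integrable_indicator_Ico _ _).const_mul _]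
  simp only [MeasureTheory.integral_const_mul,
    MeasureTheory.integral_indicator_one measurableSet_Ico, Real.volume_real_Ico]

variable [DecidableEq V]

theorem lap_isSymm (hw : ∀ i j, w i j = w j i) (κ : V → ℝ) : (lap w κ).IsSymm :=
  ((isSymm_diagonal _).add (isSymm_diagonal _)).sub (IsSymm.ext fun i j ↦ hw j i)

theorem dirichletEnergy_add_eq (hw : ∀ i j, w i j = w j i) (κ f : V → ℝ) :
    dirichletEnergy w f + 2 * ∑ i, κ i * f i ^ 2 = 2 * (f ⬝ᵥ lap w κ *ᵥ f) := by
  have hswap := sum_mul_swap hw fun i _ ↦ f i ^ 2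
  have hform : f ⬝ᵥ lap w κ *ᵥ f = ∑ i, ∑ j, w i j * f i ^ 2 + ∑ i, κ i * f i ^ 2 -
      ∑ i, ∑ j, w i j * (f i * f j) := by
    have hdiag (d : V → ℝ) : f ⬝ᵥ diagonal d *ᵥ f = ∑ i, d i * f i ^ 2 :=
      Finset.sum_congr rfl fun i _ ↦ by rw [mulVec_diagonal]; ring
    have hoff : f ⬝ᵥ of w *ᵥ f = ∑ i, ∑ j, w i j * (f i * f j) := by
      simp only [dotProduct, mulVec, Finset.mul_sum, of_apply, mul_left_comm]
    simp only [lap, sub_mulVec, add_mulVec, dotProduct_sub, dotProduct_add, hdiag, hoff,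
      Finset.sum_mul]
  rw [hform, dirichletEnergy]
  have hexpand : ∑ i, ∑ j, w i j * (f i - f j) ^ 2 = ∑ i, ∑ j, w i j * f i ^ 2 +
      ∑ i, ∑ j, w i j * f j ^ 2 - 2 * ∑ i, ∑ j, w i j * (f i * f j) := by
    simp only [Finset.mul_sum, ← Finset.sum_add_distrib, ← Finset.sum_sub_distrib]
    ring_nf
  rw [hexpand, hswap]
  ring

theorem dirichletEnergy_le (hw : ∀ i j, w i j = w j i) (hκ : ∀ i, 0 ≤ κ i) (f : V → ℝ) :
    dirichletEnergy w f ≤ 2 * (f ⬝ᵥ lap w κ *ᵥ f) := by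
  rw [← dirichletEnergy_add_eq hw]
  exact le_add_of_nonneg_right <|
    mul_nonneg zero_le_two <| Finset.sum_nonneg fun i _ ↦ mul_nonneg (hκ i) (sq_nonneg _)

theorem lap_posSemidef (hw : ∀ i j, w i j = w j i) (hw0 : ∀ i j, 0 ≤ w i j)
    (hκ : ∀ i, 0 ≤ κ i) : (lap w κ).PosSemidef :=
  .of_dotProduct_mulVec_nonneg (lap_isSymm hw κ) fun f ↦ by
    have hle := (dirichletEnergy_nonneg hw0 f).trans (dirichletEnergy_le hw hκ f)
    rw [star_trivial]
    linarith

-- Integrating the boundary weight of the level sets `{h > t}` over `t` gives the right-hand side.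
theorem mul_sum_le_sum_mul_max_sub {h : V → ℝ} (hh : ∀ i, 0 ≤ h i) {c : ℝ}
    (hc : ∀ A : Finset V, (A : Set V) ⊆ Function.support h →
      c * A.card ≤ ∑ i ∈ A, ∑ j ∈ Aᶜ, w i j) :
    c * ∑ i, h i ≤ ∑ i, ∑ j, w i j * max (h i - h j) 0 := by
  have hlevel (t : ℝ) : ∑ i, c * (Set.Ico 0 (h i)).indicator 1 t ≤
      ∑ i, ∑ j, w i j * (Set.Ico (h j) (h i)).indicator 1 t := by
    rcases lt_or_ge t 0 with ht | ht
    · have hlow (a b : ℝ) (ha : 0 ≤ a) : (Set.Ico a b).indicator (1 : ℝ → ℝ) t = 0 :=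
        Set.indicator_of_notMem (fun hmem ↦ (ha.trans hmem.1).not_gt ht) _
      simp [hlow, hh]
    · convert hc {i | t < h i} (fun i hi ↦ (ht.trans_lt (by simpa using hi)).ne') using 1
      · simp [Set.indicator_apply, ht, Finset.sum_ite, mul_comm]
      · simp only [Set.indicator_apply, Set.mem_Ico, Pi.one_apply, mul_ite, mul_one, mul_zero,
          Finset.sum_filter, Finset.compl_filter, not_lt, and_comm (b := t < _), ite_and,
          Finset.sum_ite_irrel, Finset.sum_const_zero]
  calc c * ∑ i, h i = ∫ t, ∑ i, c * (Set.Ico 0 (h i)).indicator 1 t := by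
        simp only [integral_sum_mul_indicator_Ico (fun _ ↦ c), sub_zero, max_eq_left (hh _),
          Finset.mul_sum]
    _ ≤ ∫ t, ∑ i, ∑ j, w i j * (Set.Ico (h j) (h i)).indicator 1 t := by
        refine MeasureTheory.integral_mono (integrable_sum_mul_indicator_Ico (fun _ ↦ c) _ _) ?_
          hlevel
        simpa only [Fintype.sum_prod_type] using integrable_sum_mul_indicator_Ico
          (fun p : V × V ↦ w p.1 p.2) (fun p ↦ h p.2) fun p ↦ h p.1
    _ = ∑ i, ∑ j, w i j * max (h i - h j) 0 := by
        simpa only [Fintype.sum_prod_type] using integral_sum_mul_indicator_Ico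
          (fun p : V × V ↦ w p.1 p.2) (fun p ↦ h p.2) fun p ↦ h p.1

theorem exists_conductance_mul_sum_le {h : V → ℝ} (hh : ∀ i, 0 ≤ h i) (h0 : h ≠ 0) :
    ∃ A : Finset V, A.Nonempty ∧ (A : Set V) ⊆ Function.support h ∧
      conductance w (fun _ ↦ 1) A * ∑ i, h i ≤ ∑ i, ∑ j, w i j * max (h i - h j) 0 := by
  obtain ⟨v, hv⟩ := Function.ne_iff.mp h0
  obtain ⟨A, ⟨hA, hAh⟩, hmin⟩ := Set.exists_min_image
    {A : Finset V | A.Nonempty ∧ (A : Set V) ⊆ Function.support h} (conductance w fun _ ↦ 1)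
    (Set.toFinite _) ⟨{v}, by simpa using hv⟩
  refine ⟨A, hA, hAh, mul_sum_le_sum_mul_max_sub hh fun B hB ↦ ?_⟩
  rcases B.eq_empty_or_nonempty with rfl | hne
  · simp
  have hcond := hmin B ⟨hne, hB⟩
  rw [conductance.eq_def w _ B] at hcond
  simpa using (le_div_iff₀ (by simpa using hne.card_pos)).mp hcond

theorem conductance_nonneg {μ : V → ℝ} (hw0 : ∀ i j, 0 ≤ w i j) (hμ : ∀ i, 0 ≤ μ i)
    (A : Finset V) : 0 ≤ conductance w μ A :=
  div_nonneg (Finset.sum_nonneg fun i _ ↦ Finset.sum_nonneg fun j _ ↦ hw0 i j)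
    (Finset.sum_nonneg fun i _ ↦ hμ i)

theorem exists_conductance_le_sqrt (hw : ∀ i j, w i j = w j i) (hw0 : ∀ i j, 0 ≤ w i j)
    (hκ : ∀ i, 0 ≤ κ i) {f : V → ℝ} (hf : f ≠ 0) {c : ℝ}
    (hfc : f ⬝ᵥ lap w κ *ᵥ f ≤ c * (f ⬝ᵥ f)) :
    ∃ A : Finset V, A.Nonempty ∧ (A : Set V) ⊆ Function.support f ∧
      conductance w (fun _ ↦ 1) A ≤ √(2 * tauMax w (fun _ ↦ 1) * c) := by
  set τ := tauMax w fun _ ↦ 1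
  obtain ⟨A, hA, hAf, hle⟩ := exists_conductance_mul_sum_le (w := w) (h := fun i ↦ f i ^ 2)
    (fun i ↦ sq_nonneg _) (by simpa [funext_iff] using hf)
  set φ := conductance w (fun _ ↦ 1) A
  refine ⟨A, hA, hAf.trans (by simp), ?_⟩
  have hnorm : ∑ i, f i ^ 2 = f ⬝ᵥ f := by simp only [dotProduct, pow_two]
  have hpos : 0 < f ⬝ᵥ f := by
    simpa using dotProduct_star_self_pos_iff.mpr hf
  have hsum : 2 * φ * (f ⬝ᵥ f) ≤ ∑ i, ∑ j, w i j * |f i ^ 2 - f j ^ 2| := by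
    rw [← two_mul_sum_mul_max_sub hw, ← hnorm]
    linarith
  have hφ : 0 ≤ φ := conductance_nonneg hw0 (fun _ ↦ zero_le_one) A
  have hsq : (φ * (f ⬝ᵥ f)) ^ 2 ≤ 2 * τ * c * (f ⬝ᵥ f) ^ 2 := by
    have hτ := sum_mul_add_sq_le hw hw0 f
    have hE := (dirichletEnergy_le hw hκ f).trans (mul_le_mul_of_nonneg_left hfc zero_le_two)
    have h4 := calc (2 * φ * (f ⬝ᵥ f)) ^ 2
        ≤ (∑ i, ∑ j, w i j * |f i ^ 2 - f j ^ 2|) ^ 2 := by gcongr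
      _ ≤ dirichletEnergy w f * ∑ i, ∑ j, w i j * (f i + f j) ^ 2 :=
          sq_sum_mul_abs_sq_sub_sq_le hw0 f
      _ ≤ (2 * (c * (f ⬝ᵥ f))) * (4 * τ * (f ⬝ᵥ f)) :=
          mul_le_mul hE hτ (Finset.sum_nonneg fun i _ ↦ Finset.sum_nonneg fun j _ ↦
            mul_nonneg (hw0 i j) (sq_nonneg _)) ((dirichletEnergy_nonneg hw0 f).trans hE)
    linarith
  refine Real.le_sqrt_of_sq_le (le_of_mul_le_mul_right ?_ (pow_pos hpos 2))
  rwa [← mul_pow]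

theorem cheeger_le_of_disjoint {k : ℕ} {μ : V → ℝ} (hw0 : ∀ i j, 0 ≤ w i j)
    (hμ : ∀ i, 0 ≤ μ i) {A : Fin k → Finset V} (hA : ∀ a, (A a).Nonempty)
    (hdisj : Pairwise (Function.onFun Disjoint A)) {r : ℝ} (hr : 0 ≤ r)
    (hAr : ∀ a, conductance w μ (A a) ≤ r) : cheeger k w μ ≤ r := by
  refine csInf_le_of_le ⟨0, ?_⟩ ⟨A, hA, hdisj, rfl⟩ (Real.iSup_le hAr hr)
  rintro _ ⟨B, -, -, rfl⟩
  exact Real.iSup_nonneg fun a ↦ conductance_nonneg hw0 hμ (B a)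

theorem cheeger_card_le_sqrt [Fintype ι] (hw : ∀ i j, w i j = w j i) (hw0 : ∀ i j, 0 ≤ w i j)
    (hκ : ∀ i, 0 ≤ κ i) {f : ι → V → ℝ} (hf : ∀ a, f a ≠ 0)
    (hdisj : Pairwise (Function.onFun Disjoint fun a ↦ Function.support (f a))) {c : ℝ}
    (hfc : ∀ a, f a ⬝ᵥ lap w κ *ᵥ f a ≤ c * (f a ⬝ᵥ f a)) :
    cheeger (Fintype.card ι) w (fun _ ↦ 1) ≤ √(2 * tauMax w (fun _ ↦ 1) * c) := by
  choose A hA hAf hAc using fun a ↦ exists_conductance_le_sqrt hw hw0 hκ (hf a) (hfc a)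
  refine cheeger_le_of_disjoint hw0 (fun _ ↦ zero_le_one)
    (A := fun i ↦ A ((Fintype.equivFin ι).symm i)) (fun i ↦ hA _) (fun i j hij ↦ ?_)
    (Real.sqrt_nonneg _) fun i ↦ hAc _
  rw [Function.onFun, ← Finset.disjoint_coe]
  exact (hdisj ((Fintype.equivFin ι).symm.injective.ne hij)).mono (hAf _) (hAf _)

end Cheeger

/-! ### Product graphs -/

section Product

variable {V₁ V₂ ι : Type*}

/-- The elementary tensor `g ⊗ h` of two functions, as a function on the product vertex set. -/
def prodFun (g : V₁ → ℝ) (h : V₂ → ℝ) (p : V₁ × V₂) : ℝ :=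
  g p.1 * h p.2

theorem support_prodFun (g : V₁ → ℝ) (h : V₂ → ℝ) :
    Function.support (prodFun g h) = Function.support g ×ˢ Function.support h := by
  ext p
  simp [prodFun]

theorem prodFun_ne_zero {g : V₁ → ℝ} {h : V₂ → ℝ} (hg : g ≠ 0) (hh : h ≠ 0) :
    prodFun g h ≠ 0 := by
  rw [← Function.support_nonempty_iff] at *
  exact support_prodFun g h ▸ hg.prod hh

theorem pairwise_disjoint_support_prodFun_single [DecidableEq V₂] {g : ι → V₁ → ℝ}
    (hg : Pairwise (Function.onFun Disjoint fun a ↦ Function.support (g a))) :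
    Pairwise (Function.onFun Disjoint fun p : ι × V₂ ↦
      Function.support (prodFun (g p.1) (Pi.single p.2 1))) := by
  rintro ⟨a, y⟩ ⟨b, z⟩ hne
  rw [Function.onFun, support_prodFun, support_prodFun, Set.disjoint_prod]
  refine or_iff_not_imp_left.mpr fun hab ↦ ?_
  have hab : a = b := not_imp_comm.mp (@hg a b) hab
  simpa using fun hyz : y = z ↦ hne (Prod.ext hab hyz)

theorem dotProduct_prodFun [Fintype V₁] [Fintype V₂] (g g' : V₁ → ℝ)
    (h h' : V₂ → ℝ) : prodFun g h ⬝ᵥ prodFun g' h' = (g ⬝ᵥ g') * (h ⬝ᵥ h') := by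
  simp only [dotProduct, prodFun, Fintype.sum_prod_type, Finset.sum_mul_sum, mul_mul_mul_comm]

open scoped Kronecker in
theorem kronecker_mulVec_prodFun [Fintype V₁] [Fintype V₂] (A : Matrix V₁ V₁ ℝ)
    (B : Matrix V₂ V₂ ℝ) (g : V₁ → ℝ) (h : V₂ → ℝ) :
    (A ⊗ₖ B) *ᵥ prodFun g h = prodFun (A *ᵥ g) (B *ᵥ h) := by
  ext p
  simp only [mulVec, dotProduct, prodFun, kroneckerMap_apply, Fintype.sum_prod_type,
    Finset.sum_mul_sum, mul_mul_mul_comm]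

variable [DecidableEq V₁] [DecidableEq V₂] {w₁ : V₁ → V₁ → ℝ} {w₂ : V₂ → V₂ → ℝ}

theorem prodWeight_symm (hw₁ : ∀ i j, w₁ i j = w₁ j i) (hw₂ : ∀ i j, w₂ i j = w₂ j i)
    (p q : V₁ × V₂) : prodWeight w₁ w₂ p q = prodWeight w₁ w₂ q p := by
  simp only [prodWeight, hw₁ p.1, hw₂ p.2, eq_comm]

theorem prodWeight_nonneg (hw₁ : ∀ i j, 0 ≤ w₁ i j) (hw₂ : ∀ i j, 0 ≤ w₂ i j) (p q : V₁ × V₂) :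
    0 ≤ prodWeight w₁ w₂ p q := by
  have := hw₁ p.1 q.1
  have := hw₂ p.2 q.2
  unfold prodWeight
  positivity

variable [Fintype V₁] [Fintype V₂]

open scoped Kronecker

theorem lap_prodWeight (w₁ : V₁ → V₁ → ℝ) (w₂ : V₂ → V₂ → ℝ) (κ₁ : V₁ → ℝ) (κ₂ : V₂ → ℝ) :
    lap (prodWeight w₁ w₂) (prodPotential κ₁ κ₂) =
      lap w₁ κ₁ ⊗ₖ (1 : Matrix V₂ V₂ ℝ) + (1 : Matrix V₁ V₁ ℝ) ⊗ₖ lap w₂ κ₂ := by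
  have hdeg (p : V₁ × V₂) : ∑ q, prodWeight w₁ w₂ p q = ∑ j, w₁ p.1 j + ∑ j, w₂ p.2 j := by
    simp [prodWeight, Fintype.sum_prod_type, Finset.sum_add_distrib, add_comm]
  ext ⟨x, y⟩ ⟨x', y'⟩
  simp only [lap, hdeg, Matrix.sub_apply, Matrix.add_apply, kroneckerMap_apply, of_apply,
    diagonal_apply, one_apply, prodPotential, Prod.mk.injEq]
  grind only [prodWeight]

theorem rayleigh_prodFun_le {A : Matrix V₁ V₁ ℝ} {B : Matrix V₂ V₂ ℝ} {g : V₁ → ℝ} {h : V₂ → ℝ}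
    {a b : ℝ} (hg : g ⬝ᵥ A *ᵥ g ≤ a * (g ⬝ᵥ g)) (hh : h ⬝ᵥ B *ᵥ h ≤ b * (h ⬝ᵥ h)) :
    prodFun g h ⬝ᵥ (A ⊗ₖ (1 : Matrix V₂ V₂ ℝ) + (1 : Matrix V₁ V₁ ℝ) ⊗ₖ B) *ᵥ prodFun g h ≤
      (a + b) * (prodFun g h ⬝ᵥ prodFun g h) := by
  have hg0 : 0 ≤ g ⬝ᵥ g := dotProduct_self_star_nonneg g
  have hh0 : 0 ≤ h ⬝ᵥ h := dotProduct_self_star_nonneg h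
  simp only [add_mulVec, dotProduct_add, kronecker_mulVec_prodFun, dotProduct_prodFun, one_mulVec]
  linarith [mul_le_mul_of_nonneg_right hg hh0, mul_le_mul_of_nonneg_left hh hg0]

theorem cheeger_prodWeight_le_sqrt {G₁ : SimpleGraph V₁} (hG₁ : G₁.IsAcyclic)
    (hw₁ : ∀ i j, w₁ i j = w₁ j i) (hw₂ : ∀ i j, w₂ i j = w₂ j i)
    (hw₁0 : ∀ i j, 0 ≤ w₁ i j) (hw₂0 : ∀ i j, 0 ≤ w₂ i j)
    (hw₁G₁ : ∀ i j, i ≠ j → ¬G₁.Adj i j → w₁ i j = 0)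
    {κ₁ : V₁ → ℝ} {κ₂ : V₂ → ℝ} (hκ₁ : ∀ i, 0 ≤ κ₁ i) (hκ₂ : ∀ i, 0 ≤ κ₂ i)
    {E : Submodule ℝ (V₁ → ℝ)} {a b : ℝ} (hE : ∀ g ∈ E, g ⬝ᵥ lap w₁ κ₁ *ᵥ g ≤ a * (g ⬝ᵥ g))
    (hb : ∀ h : V₂ → ℝ, h ⬝ᵥ lap w₂ κ₂ *ᵥ h ≤ b * (h ⬝ᵥ h)) :
    cheeger (Module.finrank ℝ E * Fintype.card V₂) (prodWeight w₁ w₂) (fun _ ↦ 1) ≤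
      √(2 * tauMax (prodWeight w₁ w₂) (fun _ ↦ 1) * (a + b)) := by
  obtain ⟨g, hg0, hdisj, hg⟩ := exists_disjoint_rayleigh_le hG₁ (lap_isSymm hw₁ κ₁)
    (fun i j hij hadj ↦ by simp [lap, hij, hw₁G₁ i j hij hadj]) hE
  have hle := cheeger_card_le_sqrt (ι := Fin (Module.finrank ℝ E) × V₂)
    (f := fun p ↦ prodFun (g p.1) (Pi.single p.2 1))
    (prodWeight_symm hw₁ hw₂) (prodWeight_nonneg hw₁0 hw₂0)
    (fun p ↦ add_nonneg (hκ₁ p.1) (hκ₂ p.2))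
    (fun p ↦ prodFun_ne_zero (hg0 p.1) (Pi.single_ne_zero_iff.mpr one_ne_zero))
    (pairwise_disjoint_support_prodFun_single hdisj)
    fun p ↦ (lap_prodWeight w₁ w₂ κ₁ κ₂).symm ▸ rayleigh_prodFun_le (hg p.1) (hb _)
  rwa [Fintype.card_prod, Fintype.card_fin] at hle

end Product

theorem add_le_of_forall_add_le {n₁ n₂ : ℕ} {lam₁ : Fin n₁ → ℝ} {lam₂ : Fin n₂ → ℝ}
    {lam : Fin (n₁ * n₂) → ℝ} (hlam : Monotone lam)
    (hchar : ∏ m, (X - C (lam m)) = ∏ p : Fin n₁ × Fin n₂, (X - C (lam₁ p.1 + lam₂ p.2)))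
    (hnonneg : ∀ y, 0 ≤ lam₂ y) {i : Fin n₁} {y : Fin n₂} {m : Fin (n₁ * n₂)}
    (hm : (i + 1) * n₂ = m + 1) (hgap : ∀ j, i < j → lam₁ i + lam₂ y ≤ lam₁ j) :
    lam₁ i + lam₂ y ≤ lam m := by
  refine le_of_card_filter_lt_le hlam hchar ?_
  have hsub : ({p | lam₁ p.1 + lam₂ p.2 < lam₁ i + lam₂ y} : Finset (Fin n₁ × Fin n₂)) ⊆
      (Finset.Iic i ×ˢ Finset.univ).erase (i, y) := fun p hp ↦ by
    have hlt := (Finset.mem_filter.mp hp).2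
    refine Finset.mem_erase.mpr ⟨?_, by
      simpa using not_lt.mp fun hij ↦
        hlt.not_ge ((hgap _ hij).trans (le_add_of_nonneg_right (hnonneg _)))⟩
    rintro rfl
    exact lt_irrefl _ hlt
  refine (Finset.card_le_card hsub).trans ?_
  rw [Finset.card_erase_of_mem (by simp), Finset.card_product, Fin.card_Iic, Finset.card_fin, hm,
    Nat.add_sub_cancel]

theorem weight_nonneg {V : Type*} {G : SimpleGraph V} {w : V → V → ℝ}
    (hpos : ∀ i j, G.Adj i j → 0 < w i j) (hzero : ∀ i j, ¬G.Adj i j → w i j = 0) (i j : V) :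
    0 ≤ w i j :=
  (em (G.Adj i j)).elim (fun h ↦ (hpos i j h).le) fun h ↦ (hzero i j h).ge

theorem cheeger_product_tree_bipartite_general {V₁ V₂ : Type*} [Fintype V₁] [DecidableEq V₁]
    [Fintype V₂] [DecidableEq V₂] (n₁ n₂ : ℕ) (hn₂ : 0 < n₂) {G₁ : SimpleGraph V₁}
    (hforest : G₁.IsAcyclic) {w₁ : V₁ → V₁ → ℝ} {w₂ : V₂ → V₂ → ℝ}
    (hsymm₁ : ∀ i j, w₁ i j = w₁ j i) (hsymm₂ : ∀ i j, w₂ i j = w₂ j i)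
    (hnonneg₁ : ∀ i j, 0 ≤ w₁ i j) (hnonneg₂ : ∀ i j, 0 ≤ w₂ i j)
    (hzero₁ : ∀ i j, i ≠ j → ¬G₁.Adj i j → w₁ i j = 0)
    {κ₁ : V₁ → ℝ} {κ₂ : V₂ → ℝ} (hκ₁ : ∀ i, 0 ≤ κ₁ i) (hκ₂ : ∀ i, 0 ≤ κ₂ i)
    {lam₁ : Fin n₁ → ℝ} (hmono₁ : Monotone lam₁)
    (hchar₁ : (lap w₁ κ₁).charpoly = ∏ i, (X - C (lam₁ i)))
    {lam₂ : Fin n₂ → ℝ} (hmono₂ : Monotone lam₂)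
    (hchar₂ : (lap w₂ κ₂).charpoly = ∏ i, (X - C (lam₂ i)))
    {lam : Fin (n₁ * n₂) → ℝ} (hmono : Monotone lam)
    (hchar : (lap (prodWeight w₁ w₂) (prodPotential κ₁ κ₂)).charpoly = ∏ i, (X - C (lam i)))
    (k : ℕ) (hk₁ : 1 ≤ k) (hk₂ : k + 1 ≤ n₁)
    (hgap : lam₂ ⟨n₂ - 1, by omega⟩ ≤ lam₁ ⟨k, by omega⟩ - lam₁ ⟨k - 1, by omega⟩) :
    cheeger (k * n₂) (prodWeight w₁ w₂) (fun _ ↦ 1) ≤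
      √(2 * tauMax (prodWeight w₁ w₂) (fun _ ↦ 1) *
        lam ⟨k * n₂ - 1, by
          have h1 : k * n₂ < n₁ * n₂ := mul_lt_mul_of_pos_right (by omega) hn₂
          omega⟩) := by
  set i : Fin n₁ := ⟨k - 1, by omega⟩
  set y : Fin n₂ := ⟨n₂ - 1, by omega⟩
  obtain ⟨E, hE_rank, hE⟩ := exists_submodule_rayleigh_le (lap_isSymm hsymm₁ κ₁) hchar₁
    (s := Finset.Iic i) fun j hj ↦ hmono₁ (Finset.mem_Iic.mp hj)
  have hL₂ := rayleigh_le_of_charpoly_eq_prod (lap_isSymm hsymm₂ κ₂) hchar₂ (c := lam₂ y)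
    fun j ↦ hmono₂ (Fin.mk_le_mk.mpr (by omega))
  have hcheeger := cheeger_prodWeight_le_sqrt hforest hsymm₁ hsymm₂ hnonneg₁ hnonneg₂ hzero₁
    hκ₁ hκ₂ hE hL₂
  have hspec := charpoly_kronecker_one_add_one_kronecker (lap_isSymm hsymm₁ κ₁)
    (lap_isSymm hsymm₂ κ₂) hchar₁ hchar₂
  rw [← lap_prodWeight, hchar] at hspec
  rw [hE_rank, Fin.card_Iic, Nat.sub_add_cancel hk₁, card_eq_of_charpoly_eq_prod hchar₂,
    Fintype.card_fin] at hcheeger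
  refine hcheeger.trans (Real.sqrt_le_sqrt (mul_le_mul_of_nonneg_left ?_ ?_))
  · refine add_le_of_forall_add_le hmono hspec (nonneg_of_posSemidef_of_charpoly_eq_prod
      (lap_posSemidef hsymm₂ hnonneg₂ hκ₂) hchar₂) ?_ fun j hij ↦ ?_
    · simp only [i, Nat.sub_add_cancel hk₁]
      exact (Nat.sub_add_cancel (Nat.mul_pos hk₁ hn₂)).symm
    · exact (le_sub_iff_add_le'.mp hgap).trans
        (hmono₁ (Fin.mk_le_of_le_val (Nat.le_of_pred_lt hij)))
  · exact mul_nonneg zero_le_two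
      (tauMax_nonneg (prodWeight_nonneg hnonneg₁ hnonneg₂) fun _ ↦ zero_le_one)

/-- **Higher-order Cheeger inequality for a product of a tree and a bipartite graph.**
Let `G₁` be a weighted tree and `G₂` a weighted bipartite graph, both with vertex measure
`≡ 1` and nonnegative potentials, and let `G` be their product. If the largest Laplacian
eigenvalue of `G₂` satisfies `λ²_{n₂} < λ¹_{k+1} - λ¹_k`, then
`ρ_{k n₂}(G) ≤ √(2 τ_G λ_{k n₂})`. -/
theorem cheeger_product_tree_bipartite (n₁ n₂ : ℕ) (hn₂ : 0 < n₂)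
    (G₁ : SimpleGraph (Fin n₁)) [DecidableRel G₁.Adj]
    (G₂ : SimpleGraph (Fin n₂)) [DecidableRel G₂.Adj]
    (hconn : G₁.Connected) (htree : G₁.edgeFinset.card = n₁ - 1)
    (hbip : G₂.Colorable 2)
    (w₁ : Fin n₁ → Fin n₁ → ℝ) (w₂ : Fin n₂ → Fin n₂ → ℝ)
    (hsymm₁ : ∀ i j, w₁ i j = w₁ j i) (hsymm₂ : ∀ i j, w₂ i j = w₂ j i)
    (hpos₁ : ∀ i j, G₁.Adj i j → 0 < w₁ i j) (hpos₂ : ∀ i j, G₂.Adj i j → 0 < w₂ i j)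
    (hzero₁ : ∀ i j, ¬ G₁.Adj i j → w₁ i j = 0) (hzero₂ : ∀ i j, ¬ G₂.Adj i j → w₂ i j = 0)
    (κ₁ : Fin n₁ → ℝ) (κ₂ : Fin n₂ → ℝ) (hκ₁ : ∀ i, 0 ≤ κ₁ i) (hκ₂ : ∀ i, 0 ≤ κ₂ i)
    (lam₁ : Fin n₁ → ℝ) (hmono₁ : Monotone lam₁)
    (hchar₁ : (lap w₁ κ₁).charpoly = ∏ i, (X - C (lam₁ i)))
    (lam₂ : Fin n₂ → ℝ) (hmono₂ : Monotone lam₂)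
    (hchar₂ : (lap w₂ κ₂).charpoly = ∏ i, (X - C (lam₂ i)))
    (lam : Fin (n₁ * n₂) → ℝ) (hmono : Monotone lam)
    (hchar : (lap (prodWeight w₁ w₂) (prodPotential κ₁ κ₂)).charpoly =
      ∏ i, (X - C (lam i)))
    (k : ℕ) (hk₁ : 1 ≤ k) (hk₂ : k + 1 ≤ n₁)
    (hgap : lam₂ ⟨n₂ - 1, by omega⟩ < lam₁ ⟨k, by omega⟩ - lam₁ ⟨k - 1, by omega⟩) :
    cheeger (k * n₂) (prodWeight w₁ w₂) (fun _ => 1) ≤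
      Real.sqrt (2 * tauMax (prodWeight w₁ w₂) (fun _ => 1) *
        lam ⟨k * n₂ - 1, by
          have h1 : k * n₂ < n₁ * n₂ := mul_lt_mul_of_pos_right (by omega) hn₂
          omega⟩) := by
  have hG₁ : G₁.IsTree := SimpleGraph.isTree_iff_connected_and_card.mpr ⟨hconn, by
    have := Fin.pos_iff_nonempty.mpr hconn.nonempty
    rw [Nat.card_fin, Nat.card_eq_fintype_card, ← SimpleGraph.edgeFinset_card, htree]; omega⟩
  exact cheeger_product_tree_bipartite_general n₁ n₂ hn₂ hG₁.isAcyclic hsymm₁ hsymm₂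
    (weight_nonneg hpos₁ hzero₁) (weight_nonneg hpos₂ hzero₂) (fun i j _ ↦ hzero₁ i j) hκ₁ hκ₂
    hmono₁ hchar₁ hmono₂ hchar₂ hmono hchar k hk₁ hk₂ hgap.le
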